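/- For the elephant random walk with memory parameter p ∈ [0, 1) on a Cayley graph that is the d-regular tree T_d (d ≥ 3), the normalized distance from the root converges almost surely: Δ_n / n → (d − 2)/d as n → ∞. -/

import Mathlib

open MeasureTheory ProbabilityTheory Filter

noncomputable section

/-- The Cayley graph of a group with respect to a finite set of generators. -/
def cayleyGraph {G : Type*} [Group G] (S : Finset G) : SimpleGraph G where
  Adj x y := x ≠ y ∧ (y * x⁻¹ ∈ S ∨ x * y⁻¹ ∈ S)
  symm := by
    constructor
    rintro x y ⟨h1, h2⟩
    refine ⟨h1.symm, ?_⟩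
    rcases h2 with h | h
    · exact Or.inr h
    · exact Or.inl h
  loopless := ⟨fun x h => h.1 rfl⟩

/-- The elephant random walk (ERW) with memory parameter `p` on the Cayley graph of a
group `G` with respect to a symmetric generating set `S` of cardinality `d`, not
containing the identity, whose Cayley graph is a tree (hence the `d`-regular tree
`T_d`).  The steps are `g 1, g 2, …` (the value of `g 0` is irrelevant).  The law of
the process is characterised by: `g 1` is uniform on `S`, and, conditionally on the
first `n` steps being `s 1, …, s n`, the next step `g (n+1)` equals `a ∈ S` with
probability `p * N/n + ((1-p)/(d-1)) * (n-N)/n`, where `N = #{1 ≤ k ≤ n : s k = a}`;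
this is precisely the probability that the walker, recalling a uniform past epoch
`D ∈ {1, …, n}`, repeats `g D` with probability `p` and takes any given other step
with probability `(1-p)/(d-1)`. -/
structure ERW (G : Type*) [Group G] [DecidableEq G] (d : ℕ) (p : ℝ)
    (Ω : Type*) [MeasurableSpace Ω] (P : Measure Ω) where
  S : Finset G
  card_S : S.card = d
  symm_S : ∀ s ∈ S, s⁻¹ ∈ S
  one_not_mem : (1 : G) ∉ S
  tree : (cayleyGraph S).IsTree
  g : ℕ → Ω → G
  meas_g : ∀ n a, MeasurableSet {ω | g n ω = a}
  mem_S : ∀ n, 1 ≤ n → ∀ ω, g n ω ∈ S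
  init : ∀ a ∈ S, (P {ω | g 1 ω = a}).toReal = 1 / d
  update : ∀ n, 1 ≤ n → ∀ s : ℕ → G, ∀ a ∈ S,
    (P ({ω | ∀ k ∈ Finset.Icc 1 n, g k ω = s k} ∩ {ω | g (n + 1) ω = a})).toReal
      = (p * ((((Finset.Icc 1 n).filter fun k => s k = a).card : ℝ) / n)
          + (1 - p) / ((d : ℝ) - 1)
            * (((n : ℝ) - (((Finset.Icc 1 n).filter fun k => s k = a).card : ℝ)) / n))
        * (P {ω | ∀ k ∈ Finset.Icc 1 n, g k ω = s k}).toReal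

namespace ERW

variable {G : Type*} [Group G] [DecidableEq G] {d : ℕ} {p : ℝ}
  {Ω : Type*} [MeasurableSpace Ω] {P : Measure Ω}

/-- The position `w n = g n ⋯ g 1` of the walk at time `n`. -/
def pos (E : ERW G d p Ω P) : ℕ → Ω → G
  | 0 => fun _ => 1
  | n + 1 => fun ω => E.g (n + 1) ω * E.pos n ω

/-- `Δ n`: the (word-metric) distance of the walker from the root at time `n`. -/
def dist (E : ERW G d p Ω P) (n : ℕ) (ω : Ω) : ℕ :=
  (cayleyGraph E.S).dist 1 (E.pos n ω)

/-- `N n a`: the number of `a`-steps taken by time `n`. -/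
def count (E : ERW G d p Ω P) (a : G) (n : ℕ) (ω : Ω) : ℕ :=
  ((Finset.Icc 1 n).filter fun k => E.g k ω = a).card

/-- `γ n`: the unique step decreasing the distance to the root by 1
(a junk value if the walker is at the root). -/
def gammaStep (E : ERW G d p Ω P) (n : ℕ) (ω : Ω) : G :=
  @Classical.epsilon G ⟨1⟩ fun s =>
    s ∈ E.S ∧ (cayleyGraph E.S).dist 1 (s * E.pos n ω) + 1 = E.dist n ω

/-- `ℓ n = N n (γ n)` if the walker is away from the root, and `0` otherwise. -/
def ell (E : ERW G d p Ω P) (n : ℕ) (ω : Ω) : ℕ :=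
  if E.pos n ω = 1 then 0 else E.count (E.gammaStep n ω) n ω

/-- `Ξ n = (1/n) ∑_{k=0}^{n-1} (ℓ k / k - 1(Δ k > 0)/d)` (with the convention
`ℓ 0 / 0 = 0`, automatic since division by zero yields zero). -/
def Xi (E : ERW G d p Ω P) (n : ℕ) (ω : Ω) : ℝ :=
  (1 / n) * ∑ k ∈ Finset.range n,
    ((E.ell k ω : ℝ) / k - (if 0 < E.dist k ω then 1 else 0) / d)

/-- The natural filtration `F n` generated by the steps up to time `n`. -/
def filt (E : ERW G d p Ω P) (n : ℕ) : MeasurableSpace Ω :=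
  ⨆ k ∈ Finset.Icc 1 n, MeasurableSpace.comap (E.g k) ⊤

/-- `G n = E[Δ (n+1) - Δ n | F n]`. -/
def drift (E : ERW G d p Ω P) (n : ℕ) : Ω → ℝ :=
  P[fun ω => ((E.dist (n + 1) ω : ℝ) - (E.dist n ω : ℝ)) | E.filt n]

/-- The martingale differences `Y k = Δ k - Δ (k-1) - G (k-1)`. -/
def mdiff (E : ERW G d p Ω P) (k : ℕ) (ω : Ω) : ℝ :=
  (E.dist k ω : ℝ) - (E.dist (k - 1) ω : ℝ) - E.drift (k - 1) ω

/-- The martingale `M n = ∑_{k=1}^n Y k`. -/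
def mart (E : ERW G d p Ω P) (n : ℕ) (ω : Ω) : ℝ :=
  ∑ k ∈ Finset.Icc 1 n, E.mdiff k ω

end ERW

/-- The rate `r n`: `√n` in the subcritical regime `p < p_d = (d+1)/(2d)`,
`√(n / log n)` in the critical regime `p = p_d`, and `n ^ (d(1-p)/(d-1))` in the
supercritical regime `p > p_d`. -/
def rate (p : ℝ) (d : ℕ) (n : ℕ) : ℝ :=
  if p < ((d : ℝ) + 1) / (2 * d) then Real.sqrt n
  else if p = ((d : ℝ) + 1) / (2 * d) then Real.sqrt ((n : ℝ) / Real.log n)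
  else (n : ℝ) ^ ((d : ℝ) * (1 - p) / ((d : ℝ) - 1))

/-!
Write `α = (p d - 1) / (d - 1)`, so that `|α| < 1`. Given the past, step `n + 1` equals `a` with
probability `1/d + α (N n a / n - 1/d)`. A strong law for bounded martingale differences replaces
`N n a / n` by the Cesàro mean of the earlier step probabilities; their deviation from `1/d` is
thus, up to `o(1)`, `α` times its own Cesàro mean, which forces it to vanish. Every step therefore
becomes asymptotically uniform. On the tree exactly one of the `d` steps leads towards the root
when the walker is not there, and none does when it is, so the drift of `Δ` is asymptotically
`(d - 2)/d` off the root and `1` at the root. Being bounded below by a positive constant, it drives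
the walk away from the root for good, and the strong law applied to the increments of `Δ` gives the
limit.
-/

section StrongLaw

variable {Ω : Type*} {mΩ : MeasurableSpace Ω} {μ : Measure Ω}

lemma integral_sum_sq_of_pairwise_orthogonal {ι : Type*} {s : Finset ι} {Y : ι → Ω → ℝ}
    (hY : ∀ i ∈ s, MemLp (Y i) 2 μ)
    (horth : (s : Set ι).Pairwise fun i j => ∫ ω, Y i ω * Y j ω ∂μ = 0) :
    ∫ ω, (∑ i ∈ s, Y i ω) ^ 2 ∂μ = ∑ i ∈ s, ∫ ω, Y i ω ^ 2 ∂μ := by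
  have hint : ∀ i ∈ s, ∀ j ∈ s, Integrable (fun ω => Y i ω * Y j ω) μ := fun i hi j hj =>
    (hY i hi).integrable_mul (hY j hj)
  simp_rw [pow_two, Finset.sum_mul_sum]
  rw [integral_finsetSum _ fun i hi => integrable_finsetSum _ (hint i hi)]
  refine Finset.sum_congr rfl fun i hi => ?_
  rw [integral_finsetSum _ (hint i hi)]
  exact Finset.sum_eq_single_of_mem i hi fun j hj hji => horth hi hj hji.symm

lemma ae_tendsto_zero_of_summable_integral_sq {Z : ℕ → Ω → ℝ} (hZ : ∀ k, MemLp (Z k) 2 μ)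
    (hsum : Summable fun k => ∫ ω, Z k ω ^ 2 ∂μ) :
    ∀ᵐ ω ∂μ, Tendsto (fun k => Z k ω) atTop (nhds 0) := by
  have hnorm : ∀ k, eLpNorm (fun ω => Z k ω ^ 2) 1 μ = ENNReal.ofReal (∫ ω, Z k ω ^ 2 ∂μ) := by
    intro k
    rw [eLpNorm_one_eq_lintegral_enorm, ofReal_integral_eq_lintegral_ofReal (hZ k).integrable_sq
      (Eventually.of_forall fun ω => sq_nonneg _)]
    simp_rw [Real.enorm_of_nonneg (sq_nonneg _)]
  have hsummable : ∀ᵐ ω ∂μ, Summable fun k => ‖Z k ω ^ 2‖ := by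
    refine summable_norm_of_tsum_eLpNorm_ne_top le_rfl
      (fun k => (hZ k).integrable_sq.aestronglyMeasurable) ?_
    simp_rw [hnorm]
    exact hsum.tsum_ofReal_ne_top
  filter_upwards [hsummable] with ω hω
  have hsq : Tendsto (fun k => |Z k ω| ^ 2) atTop (nhds 0) := by
    simpa only [norm_pow, Real.norm_eq_abs] using hω.tendsto_atTop_zero
  rw [tendsto_zero_iff_abs_tendsto_zero]
  simpa only [Function.comp_def, Real.sqrt_sq (abs_nonneg _), Real.sqrt_zero] using hsq.sqrt

lemma eventually_succ_sq_le_mul_sq {a : ℝ} (ha : 1 < a) :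
    ∀ᶠ k : ℕ in atTop, (((k + 1) ^ 2 : ℕ) : ℝ) ≤ a * ((k ^ 2 : ℕ) : ℝ) := by
  have hlim : Tendsto (fun k : ℕ => (1 + 1 / (k : ℝ)) ^ 2) atTop (nhds 1) := by
    simpa using (tendsto_one_div_atTop_nhds_zero_nat (𝕜 := ℝ)).const_add 1 |>.pow 2
  filter_upwards [hlim.eventually_le_const ha, eventually_gt_atTop 0] with k hk hk0
  calc (((k + 1) ^ 2 : ℕ) : ℝ) = (1 + 1 / (k : ℝ)) ^ 2 * ((k ^ 2 : ℕ) : ℝ) := by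
        push_cast
        field_simp
    _ ≤ a * ((k ^ 2 : ℕ) : ℝ) := by gcongr

/-- Adding `C * n` makes the partial sums monotone, and a monotone sequence is controlled by its
values along the squares. -/
lemma tendsto_sum_div_zero_of_tendsto_sq {y : ℕ → ℝ} {C : ℝ} (hC : ∀ n, |y n| ≤ C)
    (hsq : Tendsto (fun k : ℕ => (∑ j ∈ Finset.range (k ^ 2), y j) / ((k ^ 2 : ℕ) : ℝ)) atTop
      (nhds 0)) :
    Tendsto (fun n : ℕ => (∑ k ∈ Finset.range n, y k) / n) atTop (nhds 0) := by
  have hmono : Monotone fun n : ℕ => ∑ k ∈ Finset.range n, y k + C * n := by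
    refine monotone_nat_of_le_succ fun n => ?_
    rw [Finset.sum_range_succ]
    push_cast
    linarith [neg_le_of_abs_le (hC n)]
  have hsplit : ∀ n : ℕ, n ≠ 0 → (∑ k ∈ Finset.range n, y k + C * n) / n
      = (∑ k ∈ Finset.range n, y k) / n + C := fun n hn => by field_simp
  have hshift : Tendsto (fun n : ℕ => (∑ k ∈ Finset.range n, y k + C * n) / n) atTop
      (nhds C) := by
    refine tendsto_div_of_monotone_of_exists_subseq_tendsto_div _ C hmono fun a ha =>
      ⟨fun k => k ^ 2, eventually_succ_sq_le_mul_sq ha, tendsto_pow_atTop two_ne_zero, ?_⟩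
    have hadd := hsq.add_const C
    rw [zero_add] at hadd
    refine hadd.congr' ?_
    filter_upwards [eventually_ne_atTop 0] with k hk using (hsplit _ (pow_ne_zero 2 hk)).symm
  have hsub := hshift.sub_const C
  rw [sub_self] at hsub
  refine hsub.congr' ?_
  filter_upwards [eventually_ne_atTop 0] with n hn
  rw [hsplit n hn, add_sub_cancel_right]

variable [IsFiniteMeasure μ]

theorem strong_law_ae_of_bounded_of_pairwise_orthogonal {Y : ℕ → Ω → ℝ} {C : ℝ}
    (hm : ∀ n, AEStronglyMeasurable (Y n) μ) (hC : ∀ n, ∀ᵐ ω ∂μ, |Y n ω| ≤ C)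
    (horth : Pairwise fun i j => ∫ ω, Y i ω * Y j ω ∂μ = 0) :
    ∀ᵐ ω ∂μ, Tendsto (fun n : ℕ => (∑ k ∈ Finset.range n, Y k ω) / n) atTop (nhds 0) := by
  have hL2 : ∀ n, MemLp (Y n) 2 μ := fun n => MemLp.of_bound (hm n) C (hC n)
  set V : ℝ := ∫ _, C ^ 2 ∂μ
  have hvar : ∀ n, ∫ ω, Y n ω ^ 2 ∂μ ≤ V := by
    refine fun n => integral_mono_ae (hL2 n).integrable_sq (integrable_const _) ?_
    filter_upwards [hC n] with ω hω
    exact sq_le_sq.2 (hω.trans (le_abs_self C))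
  have hvar_sq : ∀ k : ℕ,
      ∫ ω, ((∑ j ∈ Finset.range (k ^ 2), Y j ω) / ((k ^ 2 : ℕ) : ℝ)) ^ 2 ∂μ
        ≤ V * (1 / (k : ℝ) ^ 2) := by
    intro k
    simp_rw [div_pow]
    rw [integral_div, integral_sum_sq_of_pairwise_orthogonal (fun i _ => hL2 i)
      fun i _ j _ hij => horth hij]
    calc (∑ j ∈ Finset.range (k ^ 2), ∫ ω, Y j ω ^ 2 ∂μ) / ((k ^ 2 : ℕ) : ℝ) ^ 2
        ≤ (∑ _j ∈ Finset.range (k ^ 2), V) / ((k ^ 2 : ℕ) : ℝ) ^ 2 := by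
          gcongr
          exact hvar _
      _ = V * (1 / (k : ℝ) ^ 2) := by
          rcases eq_or_ne k 0 with rfl | hk
          · simp
          · simp only [Finset.sum_const, Finset.card_range, nsmul_eq_mul]
            push_cast
            field_simp
  have hsq := ae_tendsto_zero_of_summable_integral_sq
    (fun k => (memLp_finsetSum _ fun j _ => hL2 j).mul_const (((k ^ 2 : ℕ) : ℝ))⁻¹)
    (Summable.of_nonneg_of_le (fun k => integral_nonneg fun ω => sq_nonneg _) hvar_sq
      ((Real.summable_one_div_nat_pow.2 one_lt_two).mul_left V))
  filter_upwards [hsq, ae_all_iff.2 hC] with ω hω hbound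
  exact tendsto_sum_div_zero_of_tendsto_sq hbound hω

lemma integral_mul_eq_zero_of_condExp_eq_zero {m : MeasurableSpace Ω} (hm : m ≤ mΩ)
    {f g : Ω → ℝ} (hf : AEStronglyMeasurable[m] f μ) (hfg : Integrable (f * g) μ)
    (hg : Integrable g μ) (hg0 : μ[g | m] =ᵐ[μ] 0) :
    ∫ ω, f ω * g ω ∂μ = 0 := by
  have hcond : μ[f * g | m] =ᵐ[μ] 0 := by
    filter_upwards [condExp_mul_of_aestronglyMeasurable_left hf hfg hg, hg0] with ω hω hω0
    rw [hω, Pi.mul_apply, hω0, Pi.zero_apply, mul_zero]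
  calc ∫ ω, f ω * g ω ∂μ = ∫ ω, (μ[f * g | m]) ω ∂μ := (integral_condExp hm).symm
    _ = 0 := by rw [integral_congr_ae hcond, Pi.zero_def, integral_zero]

theorem strong_law_ae_sub_condExp_of_bounded (ℱ : Filtration ℕ mΩ) {f : ℕ → Ω → ℝ} {C : ℝ}
    (hf : ∀ n, StronglyMeasurable[ℱ (n + 1)] (f n)) (hC : ∀ n, ∀ᵐ ω ∂μ, |f n ω| ≤ C) :
    ∀ᵐ ω ∂μ, Tendsto
      (fun n : ℕ => (∑ k ∈ Finset.range n, (f k ω - (μ[f k | ℱ k]) ω)) / n) atTop (nhds 0) := by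
  have hfm : ∀ n, AEStronglyMeasurable (f n) μ := fun n =>
    ((hf n).mono (ℱ.le _)).aestronglyMeasurable
  have hfi : ∀ n, Integrable (f n) μ := fun n => Integrable.of_bound (hfm n) C (hC n)
  set Y : ℕ → Ω → ℝ := fun n => f n - μ[f n | ℱ n]
  have hYi : ∀ n, Integrable (Y n) μ := fun n => (hfi n).sub integrable_condExp
  have hYm : ∀ n, StronglyMeasurable[ℱ (n + 1)] (Y n) := fun n =>
    (hf n).sub (stronglyMeasurable_condExp.mono (ℱ.mono n.le_succ))
  have hYC : ∀ n, ∀ᵐ ω ∂μ, |Y n ω| ≤ C + C := by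
    intro n
    filter_upwards [hC n, ae_bdd_abs_condExp_of_ae_bdd_abs (m := ℱ n) (hC n)] with ω hω hω'
    exact (abs_sub _ _).trans (add_le_add hω hω')
  have hY0 : ∀ n, μ[Y n | ℱ n] =ᵐ[μ] 0 := by
    intro n
    refine (condExp_sub (hfi n) integrable_condExp _).trans ?_
    rw [condExp_of_stronglyMeasurable (ℱ.le n) stronglyMeasurable_condExp integrable_condExp,
      sub_self]
  have horth_lt : ∀ i j, i < j → ∫ ω, Y i ω * Y j ω ∂μ = 0 := fun i j hij =>
    integral_mul_eq_zero_of_condExp_eq_zero (ℱ.le j)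
      ((hYm i).mono (ℱ.mono hij)).aestronglyMeasurable
      ((hYi j).bdd_mul (hYi i).aestronglyMeasurable (hYC i)) (hYi j) (hY0 j)
  have horth : Pairwise fun i j => ∫ ω, Y i ω * Y j ω ∂μ = 0 := by
    intro i j hij
    rcases hij.lt_or_gt with hlt | hgt
    · exact horth_lt i j hlt
    · simpa only [mul_comm] using horth_lt j i hgt
  exact strong_law_ae_of_bounded_of_pairwise_orthogonal
    (fun n => (hYi n).aestronglyMeasurable) hYC horth

end StrongLaw

section CesaroMeans

lemma inv_mul_sum_range_le_of_forall_lt {u : ℕ → ℝ} {B : ℝ} (hB : 0 ≤ B) {n : ℕ}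
    (hu : ∀ k < n, u k ≤ B) : (n : ℝ)⁻¹ * ∑ k ∈ Finset.range n, u k ≤ B := by
  rcases Nat.eq_zero_or_pos n with rfl | hn
  · simpa using hB
  · rw [inv_mul_le_iff₀ (Nat.cast_pos.2 hn)]
    simpa using Finset.sum_le_card_nsmul _ u B fun k hk => hu k (Finset.mem_range.1 hk)

variable {u e : ℕ → ℝ} {r : ℝ}

lemma exists_forall_le_of_le_add_mul_cesaro (hr0 : 0 ≤ r) (hr1 : r < 1)
    (he : Tendsto e atTop (nhds 0))
    (hu : ∀ n, u n ≤ e n + r * ((n : ℝ)⁻¹ * ∑ k ∈ Finset.range n, u k)) :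
    ∃ B, ∀ n, u n ≤ B := by
  obtain ⟨K, hK⟩ := he.bddAbove_range
  have hr : 0 < 1 - r := sub_pos.2 hr1
  set B := |K| / (1 - r)
  have hB : |K| + r * B = B := by
    simp only [B]
    field_simp
    ring
  refine ⟨B, fun n => ?_⟩
  induction n using Nat.strong_induction_on with
  | _ n ih =>
    calc u n ≤ e n + r * ((n : ℝ)⁻¹ * ∑ k ∈ Finset.range n, u k) := hu n
      _ ≤ |K| + r * B := by
        gcongr
        · exact (hK (Set.mem_range_self n)).trans (le_abs_self K)
        · exact inv_mul_sum_range_le_of_forall_lt (by positivity) ih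
      _ = B := hB

lemma limsup_le_mul_of_le_add_mul_cesaro (hr0 : 0 ≤ r) (hu0 : ∀ n, 0 ≤ u n)
    (he : Tendsto e atTop (nhds 0))
    (hu : ∀ n, u n ≤ e n + r * ((n : ℝ)⁻¹ * ∑ k ∈ Finset.range n, u k))
    {b : ℝ} (hb : ∀ᶠ n in atTop, u n ≤ b) : limsup u atTop ≤ r * b := by
  have hmax : Tendsto (fun n => max (u n) b) atTop (nhds b) :=
    tendsto_const_nhds.congr' <| hb.mono fun n hn => (max_eq_right hn).symm
  have hlim : Tendsto
      (fun n : ℕ => e n + r * ((n : ℝ)⁻¹ * ∑ k ∈ Finset.range n, max (u k) b)) atTop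
      (nhds (r * b)) := by
    simpa only [zero_add] using he.add (hmax.cesaro.const_mul r)
  rw [← hlim.limsup_eq]
  refine limsup_le_limsup (Eventually.of_forall fun n => (hu n).trans ?_)
    (isCoboundedUnder_le_of_le atTop hu0) hlim.isBoundedUnder_le
  dsimp only
  gcongr
  exact le_max_left _ _

/-- With `L = limsup u`, the hypothesis gives `L ≤ r * L`. -/
lemma tendsto_zero_of_le_add_mul_cesaro (hr0 : 0 ≤ r) (hr1 : r < 1) (hu0 : ∀ n, 0 ≤ u n)
    (he : Tendsto e atTop (nhds 0))
    (hu : ∀ n, u n ≤ e n + r * ((n : ℝ)⁻¹ * ∑ k ∈ Finset.range n, u k)) :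
    Tendsto u atTop (nhds 0) := by
  obtain ⟨B, hB⟩ := exists_forall_le_of_le_add_mul_cesaro hr0 hr1 he hu
  have hbdd : IsBoundedUnder (· ≤ ·) atTop u := isBoundedUnder_of ⟨B, hB⟩
  have hbdd' : IsBoundedUnder (· ≥ ·) atTop u := isBoundedUnder_of ⟨0, hu0⟩
  have hcontract : limsup u atTop ≤ r * limsup u atTop := by
    refine le_of_tendsto_of_tendsto (b := nhdsWithin (limsup u atTop) (Set.Ioi (limsup u atTop)))
      tendsto_const_nhds ((tendsto_id.mono_left nhdsWithin_le_nhds).const_mul r) ?_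
    filter_upwards [self_mem_nhdsWithin] with b hb
    exact limsup_le_mul_of_le_add_mul_cesaro hr0 hu0 he hu
      ((eventually_lt_of_limsup_lt hb).mono fun _ => le_of_lt)
  refine tendsto_of_le_liminf_of_limsup_le
    (le_liminf_of_le hbdd.isCoboundedUnder_ge (Eventually.of_forall hu0)) ?_ hbdd hbdd'
  nlinarith

/-- The drift only exceeds `c` where `Δ ≤ 0`; since `c > 0` this happens finitely often. -/
lemma tendsto_div_of_tendsto_drift {Δ D : ℕ → ℝ} {b c : ℝ} (hc : 0 < c) (hcb : c ≤ b)
    (hnoise : Tendsto (fun n : ℕ => (∑ k ∈ Finset.range n, (Δ (k + 1) - Δ k - D k)) / n) atTop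
      (nhds 0))
    (hdrift : Tendsto (fun k => D k - if 0 < Δ k then c else b) atTop (nhds 0)) :
    Tendsto (fun n : ℕ => Δ n / n) atTop (nhds c) := by
  have hdecomp : ∀ n : ℕ, Δ 0 / n + (∑ k ∈ Finset.range n, (Δ (k + 1) - Δ k - D k)) / n
      + (n : ℝ)⁻¹ * ∑ k ∈ Finset.range n, D k = Δ n / n := by
    intro n
    rw [Finset.sum_sub_distrib, Finset.sum_range_sub]
    ring
  have hlim : ∀ {D' : ℕ → ℝ}, Tendsto D' atTop (nhds c) → Tendsto
      (fun n : ℕ => Δ 0 / n + (∑ k ∈ Finset.range n, (Δ (k + 1) - Δ k - D k)) / n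
        + (n : ℝ)⁻¹ * ∑ k ∈ Finset.range n, D' k) atTop (nhds c) := fun hD' => by
    simpa only [zero_add] using
      ((tendsto_const_div_atTop_nhds_zero_nat (Δ 0)).add hnoise).add hD'.cesaro
  have hlower : Tendsto (fun k => (D k - if 0 < Δ k then c else b) + c) atTop (nhds c) := by
    simpa only [zero_add] using hdrift.add_const c
  have hpos : ∀ᶠ n in atTop, 0 < Δ n := by
    filter_upwards [(hlim hlower).eventually_const_lt hc, eventually_gt_atTop 0] with n hn hn0
    refine (div_pos_iff_of_pos_right (Nat.cast_pos.2 hn0)).1 (hn.trans_le ?_)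
    rw [← hdecomp n]
    gcongr with k
    split_ifs <;> linarith
  have hD : Tendsto D atTop (nhds c) := hlower.congr' <| hpos.mono fun k hk => by
    rw [if_pos hk, sub_add_cancel]
  exact (hlim hD).congr hdecomp

end CesaroMeans

section CondExpFibers

lemma measurable_top_pi_of_forall_measurableSet {Ω ι κ : Type*} {m : MeasurableSpace Ω} [Finite ι]
    [Countable κ] {H : Ω → ι → κ} (hH : ∀ i a, MeasurableSet {ω | H ω i = a}) :
    Measurable[m, ⊤] H := by
  refine @measurable_to_countable' _ _ ⊤ _ m _ fun h => ?_
  have hfiber : H ⁻¹' {h} = ⋂ i, {ω | H ω i = h i} := by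
    ext ω
    simp only [Set.mem_preimage, Set.mem_singleton_iff, Set.mem_iInter, Set.mem_ofPred_eq,
      funext_iff]
  rw [hfiber]
  exact MeasurableSet.iInter fun i => hH i (h i)

variable {Ω ι : Type*} {mΩ : MeasurableSpace Ω} {μ : Measure Ω} [Countable ι] {H : Ω → ι}

lemma setIntegral_preimage_eq_of_fibers (hH : Measurable[mΩ, ⊤] H) {f g : Ω → ℝ}
    (hf : Integrable f μ) (hg : Integrable g μ)
    (hfib : ∀ ω, ∫ x in H ⁻¹' {H ω}, g x ∂μ = ∫ x in H ⁻¹' {H ω}, f x ∂μ) (s : Set ι) :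
    ∫ x in H ⁻¹' s, g x ∂μ = ∫ x in H ⁻¹' s, f x ∂μ := by
  have hfib' : ∀ i, ∫ x in H ⁻¹' {i}, g x ∂μ = ∫ x in H ⁻¹' {i}, f x ∂μ := by
    intro i
    rcases (H ⁻¹' {i}).eq_empty_or_nonempty with hempty | ⟨ω, rfl⟩
    · rw [hempty, Measure.restrict_empty, integral_zero_measure, integral_zero_measure]
    · exact hfib ω
  have hmeas : ∀ i : s, MeasurableSet (H ⁻¹' {(i : ι)}) := fun i => hH trivial
  have hdisj : Pairwise (Function.onFun Disjoint fun i : s => H ⁻¹' {(i : ι)}) :=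
    fun i j hij => (Set.disjoint_singleton.2 (Subtype.coe_injective.ne hij)).preimage H
  rw [← Set.biUnion_preimage_singleton, Set.biUnion_eq_iUnion,
    integral_iUnion hmeas hdisj hg.integrableOn, integral_iUnion hmeas hdisj hf.integrableOn]
  exact tsum_congr fun i => hfib' i

lemma condExp_comap_ae_eq_of_fibers [IsFiniteMeasure μ] (hH : Measurable[mΩ, ⊤] H) {f g : Ω → ℝ}
    (hf : Integrable f μ) (hg : Integrable g μ) (hgH : g.FactorsThrough H)
    (hfib : ∀ ω, ∫ x in H ⁻¹' {H ω}, g x ∂μ = ∫ x in H ⁻¹' {H ω}, f x ∂μ) :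
    μ[f | MeasurableSpace.comap H ⊤] =ᵐ[μ] g := by
  obtain ⟨φ, rfl⟩ := (Function.factorsThrough_iff g).1 hgH
  refine (ae_eq_condExp_of_forall_setIntegral_eq hH.comap_le hf (fun _ _ _ => hg.integrableOn)
    ?_ ?_).symm
  · rintro _ ⟨s, -, rfl⟩ -
    exact setIntegral_preimage_eq_of_fibers hH hf hg hfib s
  · have hφ : Measurable[⊤] φ := measurable_from_top
    exact (hφ.comp (comap_measurable H)).stronglyMeasurable.aestronglyMeasurable

end CondExpFibers

section Trees

variable {V : Type*} {T : SimpleGraph V} {u v w w' : V}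

lemma exists_adj_dist_eq_add_one (hT : T.Connected) (huv : u ≠ v) :
    ∃ w, T.Adj v w ∧ T.dist u v = T.dist u w + 1 := by
  obtain ⟨q, hq⟩ := hT.exists_walk_length_eq_dist v u
  cases q with
  | nil => exact absurd rfl huv
  | @cons _ w _ hvw q =>
    refine ⟨w, hvw, le_antisymm ?_ ?_⟩
    · simpa only [SimpleGraph.dist_eq_one_iff_adj.2 hvw.symm]
        using hT.dist_triangle (u := u) (v := w) (w := v)
    · rw [SimpleGraph.dist_comm (v := v), ← hq, SimpleGraph.Walk.length_cons,
        SimpleGraph.dist_comm]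
      exact Nat.succ_le_succ (SimpleGraph.dist_le q)

lemma exists_isPath_penultimate_eq (hT : T.Connected) (hvw : T.Adj v w)
    (hdist : T.dist u v = T.dist u w + 1) :
    ∃ q : T.Walk u v, q.IsPath ∧ q.penultimate = w := by
  obtain ⟨q, hq⟩ := hT.exists_walk_length_eq_dist u w
  refine ⟨q.concat hvw.symm, SimpleGraph.Walk.isPath_of_length_eq_dist _ ?_, by simp⟩
  rw [SimpleGraph.Walk.length_concat, hq, hdist]

lemma eq_of_adj_of_dist_eq_add_one (hT : T.IsTree) (hvw : T.Adj v w) (hvw' : T.Adj v w')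
    (hw : T.dist u v = T.dist u w + 1) (hw' : T.dist u v = T.dist u w' + 1) : w = w' := by
  obtain ⟨q, hq, rfl⟩ := exists_isPath_penultimate_eq hT.connected hvw hw
  obtain ⟨q', hq', rfl⟩ := exists_isPath_penultimate_eq hT.connected hvw' hw'
  rw [(hT.existsUnique_path u v).unique hq hq']

end Trees

namespace cayleyGraph

variable {G : Type*} [Group G] {S : Finset G} {a x y : G}

lemma adj_mul_left (h1 : 1 ∉ S) (ha : a ∈ S) (x : G) : (cayleyGraph S).Adj x (a * x) := by
  refine ⟨fun hx => h1 ?_, Or.inl (by simpa using ha)⟩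
  rwa [← right_eq_mul.1 hx]

lemma exists_eq_mul_of_adj (hS : ∀ s ∈ S, s⁻¹ ∈ S) (hxy : (cayleyGraph S).Adj x y) :
    ∃ a ∈ S, y = a * x := by
  rcases hxy.2 with hyx | hxy
  · exact ⟨_, hyx, by simp⟩
  · exact ⟨_, hS _ hxy, by simp⟩

/-- The change of the distance to the identity when the step `a` is taken from `x`. -/
def radialIncrement (S : Finset G) (a x : G) : ℝ :=
  (cayleyGraph S).dist 1 (a * x) - (cayleyGraph S).dist 1 x

lemma abs_radialIncrement_le_one (h1 : 1 ∉ S) (ha : a ∈ S) (x : G) :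
    |radialIncrement S a x| ≤ 1 := by
  have hdiff := (adj_mul_left h1 ha x).diff_dist_adj (u := 1)
  have hle : (cayleyGraph S).dist 1 (a * x) ≤ 1 + (cayleyGraph S).dist 1 x := by lia
  have hge : (cayleyGraph S).dist 1 x ≤ 1 + (cayleyGraph S).dist 1 (a * x) := by lia
  rw [radialIncrement, abs_sub_le_iff, sub_le_iff_le_add, sub_le_iff_le_add]
  exact ⟨mod_cast hle, mod_cast hge⟩

lemma radialIncrement_one_right (h1 : 1 ∉ S) (ha : a ∈ S) : radialIncrement S a 1 = 1 := by
  rw [radialIncrement, SimpleGraph.dist_eq_one_iff_adj.2 (adj_mul_left h1 ha 1),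
    SimpleGraph.dist_self, Nat.cast_one, Nat.cast_zero, sub_zero]

variable [DecidableEq G]

/-- Away from the root exactly one neighbour is closer to the root. -/
lemma sum_radialIncrement (hT : (cayleyGraph S).IsTree) (hS : ∀ s ∈ S, s⁻¹ ∈ S) (h1 : 1 ∉ S)
    (x : G) : ∑ a ∈ S, radialIncrement S a x = if x = 1 then (S.card : ℝ) else S.card - 2 := by
  split_ifs with hx
  · subst hx
    rw [Finset.sum_congr rfl fun a ha => radialIncrement_one_right h1 ha, Finset.sum_const,
      nsmul_one]
  · obtain ⟨w, hxw, hw⟩ := exists_adj_dist_eq_add_one hT.connected (Ne.symm hx)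
    obtain ⟨b, hb, rfl⟩ := exists_eq_mul_of_adj hS hxw
    have hincr : ∀ a ∈ S, radialIncrement S a x = 1 - if a = b then 2 else 0 := by
      intro a ha
      have hxa := adj_mul_left h1 ha x
      unfold radialIncrement
      split_ifs with hab
      · rw [hab, hw]
        push_cast
        ring
      · rcases hT.dist_eq_dist_add_one_of_adj 1 hxa with hcloser | hfarther
        · exact absurd (mul_right_cancel (eq_of_adj_of_dist_eq_add_one hT hxa hxw hcloser hw)) hab
        · rw [hfarther]
          push_cast
          ring
    rw [Finset.sum_congr rfl hincr, Finset.sum_sub_distrib]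
    simp [hb]

end cayleyGraph

namespace ERW

variable {G : Type*} [Group G] [DecidableEq G] {d : ℕ} {p : ℝ}
  {Ω : Type*} {mΩ : MeasurableSpace Ω} {P : Measure Ω} (E : ERW G d p Ω P) {n : ℕ}

/-- The first `n` steps, as a random variable with finitely many values. -/
def history (n : ℕ) (ω : Ω) (k : Finset.Icc 1 n) : E.S :=
  ⟨E.g k ω, E.mem_S k (Finset.mem_Icc.1 k.2).1 ω⟩

lemma history_eq_iff {ω ω' : Ω} :
    E.history n ω = E.history n ω' ↔ ∀ k ∈ Finset.Icc 1 n, E.g k ω = E.g k ω' := by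
  simp only [funext_iff, history, Subtype.mk.injEq, Subtype.forall]

lemma setOf_history_apply_eq (k : Finset.Icc 1 n) (a : E.S) :
    {ω | E.history n ω k = a} = {ω | E.g k ω = a} := by
  simp only [history, Subtype.ext_iff]

lemma measurable_history : Measurable[mΩ, ⊤] (E.history n) :=
  measurable_top_pi_of_forall_measurableSet fun k a => by
    rw [setOf_history_apply_eq]
    exact E.meas_g k a

lemma filt_eq_comap_history : E.filt n = MeasurableSpace.comap (E.history n) ⊤ := by
  refine le_antisymm (iSup₂_le fun k hk => ?_)
    (measurable_top_pi_of_forall_measurableSet fun k a => ?_).comap_le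
  · rintro _ ⟨s, -, rfl⟩
    exact ⟨{h | (h ⟨k, hk⟩ : G) ∈ s}, trivial, rfl⟩
  · rw [setOf_history_apply_eq]
    exact le_iSup₂ (f := fun k _ => MeasurableSpace.comap (E.g k) ⊤) (k : ℕ) k.2 _
      ⟨{(a : G)}, trivial, rfl⟩

/-- `ERW.filt` bundled as a filtration. -/
def filtration : Filtration ℕ mΩ where
  seq := E.filt
  mono' _ _ hnm := biSup_mono fun _ hk => Finset.Icc_subset_Icc_right hnm hk
  le' n := by
    rw [filt_eq_comap_history]
    exact E.measurable_history.comap_le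

variable {E} {f : Ω → ℝ}

lemma stronglyMeasurable_of_factorsThrough_history (hf : f.FactorsThrough (E.history n)) :
    StronglyMeasurable[E.filt n] f := by
  obtain ⟨φ, rfl⟩ := (Function.factorsThrough_iff f).1 hf
  rw [filt_eq_comap_history]
  have hφ : Measurable[⊤] φ := measurable_from_top
  exact (hφ.comp (comap_measurable _)).stronglyMeasurable

lemma integrable_of_factorsThrough_history [IsFiniteMeasure P]
    (hf : f.FactorsThrough (E.history n)) : Integrable f P := by
  obtain ⟨φ, rfl⟩ := (Function.factorsThrough_iff f).1 hf
  let _ : MeasurableSpace (Finset.Icc 1 n → E.S) := ⊤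
  exact Integrable.of_finite.comp_measurable E.measurable_history

variable (E)

lemma factorsThrough_history_of_le {β : Type*} {F : Ω → β} {m : ℕ} (hnm : n ≤ m)
    (hF : F.FactorsThrough (E.history n)) : F.FactorsThrough (E.history m) :=
  fun _ _ h => hF <| E.history_eq_iff.2 fun k hk =>
    E.history_eq_iff.1 h k (Finset.Icc_subset_Icc_right hnm hk)

lemma factorsThrough_step : (E.g (n + 1)).FactorsThrough (E.history (n + 1)) :=
  fun _ _ h => E.history_eq_iff.1 h _ (Finset.mem_Icc.2 ⟨n.succ_pos, le_rfl⟩)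

lemma factorsThrough_pos : (E.pos n).FactorsThrough (E.history n) := by
  induction n with
  | zero => exact fun _ _ _ => rfl
  | succ n ih =>
    intro ω ω' h
    simp only [pos, E.factorsThrough_step h, E.factorsThrough_history_of_le n.le_succ ih h]

lemma factorsThrough_count (a : G) : (E.count a n).FactorsThrough (E.history n) := by
  intro ω ω' h
  rw [count, count, Finset.filter_congr fun k hk => by rw [E.history_eq_iff.1 h k hk]]

/-- The conditional probability, given the first `n` steps, that step `n + 1` equals `a`. -/
def stepProb (a : G) (n : ℕ) (ω : Ω) : ℝ :=
  if n = 0 then 1 / d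
  else p * ((E.count a n ω : ℝ) / n) + (1 - p) / ((d : ℝ) - 1) * ((n - E.count a n ω) / n)

lemma factorsThrough_stepProb (a : G) : (E.stepProb a n).FactorsThrough (E.history n) := by
  intro ω ω' h
  rw [stepProb, stepProb, E.factorsThrough_count a h]

lemma measureReal_history_fiber_inter_step [IsProbabilityMeasure P] {a : G} (ha : a ∈ E.S)
    (ω : Ω) :
    P.real (E.history n ⁻¹' {E.history n ω} ∩ {x | E.g (n + 1) x = a})
      = E.stepProb a n ω * P.real (E.history n ⁻¹' {E.history n ω}) := by
  have hfiber : E.history n ⁻¹' {E.history n ω} = {x | ∀ k ∈ Finset.Icc 1 n, E.g k x = E.g k ω} :=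
    Set.ext fun x => E.history_eq_iff
  rw [hfiber]
  rcases Nat.eq_zero_or_pos n with rfl | hn
  · simpa [stepProb, measureReal_def] using E.init a ha
  · rw [stepProb, if_neg hn.ne']
    exact E.update n hn (fun k => E.g k ω) a ha

lemma condExp_indicator_step [IsProbabilityMeasure P] {a : G} (ha : a ∈ E.S) :
    P[{ω | E.g (n + 1) ω = a}.indicator 1 | E.filt n] =ᵐ[P] E.stepProb a n := by
  rw [filt_eq_comap_history]
  refine condExp_comap_ae_eq_of_fibers E.measurable_history
    ((integrable_const 1).indicator (E.meas_g _ a))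
    (integrable_of_factorsThrough_history (E.factorsThrough_stepProb a))
    (E.factorsThrough_stepProb a) fun ω => ?_
  have hfiber : MeasurableSet (E.history n ⁻¹' {E.history n ω}) := E.measurable_history trivial
  calc ∫ x in E.history n ⁻¹' {E.history n ω}, E.stepProb a n x ∂P
      = ∫ _ in E.history n ⁻¹' {E.history n ω}, E.stepProb a n ω ∂P :=
        setIntegral_congr_fun hfiber fun x hx => E.factorsThrough_stepProb a hx
    _ = P.real (E.history n ⁻¹' {E.history n ω} ∩ {x | E.g (n + 1) x = a}) := by
        rw [setIntegral_const, smul_eq_mul, mul_comm, E.measureReal_history_fiber_inter_step ha]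
    _ = ∫ x in E.history n ⁻¹' {E.history n ω}, {ω | E.g (n + 1) ω = a}.indicator 1 x ∂P := by
        rw [integral_indicator_one (E.meas_g _ a),
          measureReal_restrict_apply (E.meas_g _ a), Set.inter_comm]

lemma condExp_comp_step [IsProbabilityMeasure P] {c : G → Ω → ℝ}
    (hc : ∀ a ∈ E.S, (c a).FactorsThrough (E.history n)) :
    P[fun ω => c (E.g (n + 1) ω) ω | E.filt n]
      =ᵐ[P] fun ω => ∑ a ∈ E.S, c a ω * E.stepProb a n ω := by
  have hsum : (fun ω => c (E.g (n + 1) ω) ω)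
      = ∑ a ∈ E.S, c a * {ω | E.g (n + 1) ω = a}.indicator 1 := by
    ext ω
    simp [Set.indicator_apply, E.mem_S (n + 1) n.succ_pos ω]
  have hind : ∀ a, Integrable ({ω | E.g (n + 1) ω = a}.indicator (1 : Ω → ℝ)) P := fun a =>
    (integrable_const 1).indicator (E.meas_g _ a)
  have hint : ∀ a ∈ E.S, Integrable (c a * {ω | E.g (n + 1) ω = a}.indicator 1) P := by
    refine fun a ha =>
      integrable_of_factorsThrough_history (E := E) (n := n + 1) fun ω ω' h => ?_
    simp only [Pi.mul_apply, Set.indicator_apply, Set.mem_ofPred_eq, E.factorsThrough_step h,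
      E.factorsThrough_history_of_le n.le_succ (hc a ha) h, Pi.one_apply]
  have hterm : ∀ a ∈ E.S, P[c a * {ω | E.g (n + 1) ω = a}.indicator 1 | E.filt n]
      =ᵐ[P] c a * E.stepProb a n := fun a ha =>
    (condExp_mul_of_stronglyMeasurable_left (stronglyMeasurable_of_factorsThrough_history (hc a ha))
      (hint a ha) (hind a)).trans ((E.condExp_indicator_step ha).mono fun ω hω => by
        rw [Pi.mul_apply, Pi.mul_apply, hω])
  rw [hsum]
  filter_upwards [condExp_finsetSum hint (E.filt n), (eventually_all_finset E.S).2 hterm]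
    with ω hω hωterm
  rw [hω, Finset.sum_apply]
  exact Finset.sum_congr rfl hωterm

lemma count_eq_sum_indicator (a : G) (n : ℕ) (ω : Ω) :
    (E.count a n ω : ℝ) = ∑ k ∈ Finset.range n, {ω | E.g (k + 1) ω = a}.indicator 1 ω := by
  have hIcc : Finset.Icc 1 n = Finset.Ico (0 + 1) (n + 1) := by
    ext k
    simp
  rw [count, Finset.card_filter, Nat.cast_sum, hIcc, Finset.range_eq_Ico, ← Finset.sum_Ico_add']
  simp [Set.indicator_apply]

lemma stepProb_sub_inv_eq (hd : 2 ≤ d) (a : G) (n : ℕ) (ω : Ω) :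
    E.stepProb a n ω - 1 / d = (p * d - 1) / (d - 1) * ((n : ℝ)⁻¹ *
      ∑ k ∈ Finset.range n, ({ω | E.g (k + 1) ω = a}.indicator 1 ω - 1 / (d : ℝ))) := by
  have hd' : (2 : ℝ) ≤ d := mod_cast hd
  have hd0 : (d : ℝ) ≠ 0 := by linarith
  have hd1 : (d : ℝ) - 1 ≠ 0 := by linarith
  rw [Finset.sum_sub_distrib, ← count_eq_sum_indicator, Finset.sum_const, Finset.card_range,
    nsmul_eq_mul]
  rcases eq_or_ne n 0 with rfl | hn
  · simp [stepProb]
  · rw [stepProb, if_neg hn]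
    field_simp
    ring

lemma abs_stepProb_sub_inv_le (hd : 2 ≤ d) (a : G) (n : ℕ) (ω : Ω) :
    |E.stepProb a n ω - 1 / d| ≤ |(p * d - 1) / (d - 1)| * |(∑ k ∈ Finset.range n,
        ({ω | E.g (k + 1) ω = a}.indicator 1 ω - E.stepProb a k ω)) / n|
      + |(p * d - 1) / (d - 1)| *
        ((n : ℝ)⁻¹ * ∑ k ∈ Finset.range n, |E.stepProb a k ω - 1 / d|) := by
  have hsplit : (n : ℝ)⁻¹ * ∑ k ∈ Finset.range n,
      ({ω | E.g (k + 1) ω = a}.indicator 1 ω - 1 / (d : ℝ))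
      = (∑ k ∈ Finset.range n, ({ω | E.g (k + 1) ω = a}.indicator 1 ω - E.stepProb a k ω)) / n
        + (n : ℝ)⁻¹ * ∑ k ∈ Finset.range n, (E.stepProb a k ω - 1 / d) := by
    rw [div_eq_inv_mul (Finset.sum _ _), ← mul_add, ← Finset.sum_add_distrib]
    simp only [sub_add_sub_cancel]
  rw [stepProb_sub_inv_eq E hd, hsplit, abs_mul, ← mul_add]
  gcongr
  refine (abs_add_le _ _).trans ?_
  gcongr
  rw [abs_mul, abs_of_nonneg (by positivity : (0 : ℝ) ≤ (n : ℝ)⁻¹)]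
  gcongr
  exact Finset.abs_sum_le_sum_abs _ _

lemma dist_succ_sub_dist (n : ℕ) (ω : Ω) : (E.dist (n + 1) ω : ℝ) - E.dist n ω
    = cayleyGraph.radialIncrement E.S (E.g (n + 1) ω) (E.pos n ω) := rfl

lemma sum_radialIncrement_pos_div (hd : d ≠ 0) (n : ℕ) (ω : Ω) :
    (∑ a ∈ E.S, cayleyGraph.radialIncrement E.S a (E.pos n ω)) * (1 / d)
      = if 0 < (E.dist n ω : ℝ) then ((d : ℝ) - 2) / d else 1 := by
  have hroot : 0 < (E.dist n ω : ℝ) ↔ E.pos n ω ≠ 1 := by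
    rw [Nat.cast_pos, dist, Nat.pos_iff_ne_zero, Ne, E.tree.connected.dist_eq_zero_iff, eq_comm]
  have hd0 : (d : ℝ) ≠ 0 := Nat.cast_ne_zero.2 hd
  rw [cayleyGraph.sum_radialIncrement E.tree E.symm_S E.one_not_mem, E.card_S, mul_one_div]
  simp only [hroot, ite_not]
  split_ifs
  · exact div_self hd0
  · rfl

variable [IsProbabilityMeasure P]

lemma ae_tendsto_sum_indicator_step_sub_stepProb_div {a : G} (ha : a ∈ E.S) :
    ∀ᵐ ω ∂P, Tendsto (fun n : ℕ => (∑ k ∈ Finset.range n,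
      ({ω | E.g (k + 1) ω = a}.indicator 1 ω - E.stepProb a k ω)) / n) atTop (nhds 0) := by
  have hadapted : ∀ k, StronglyMeasurable[E.filtration (k + 1)]
      ({ω | E.g (k + 1) ω = a}.indicator (1 : Ω → ℝ)) := fun k =>
    stronglyMeasurable_of_factorsThrough_history fun ω ω' h => by
      simp only [Set.indicator_apply, Set.mem_ofPred_eq, E.factorsThrough_step h, Pi.one_apply]
  have hbound : ∀ k, ∀ᵐ ω ∂P, |{ω | E.g (k + 1) ω = a}.indicator (1 : Ω → ℝ) ω| ≤ 1 := fun k =>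
    Eventually.of_forall fun ω => by
      rw [Set.indicator_apply]
      split_ifs <;> simp
  filter_upwards [strong_law_ae_sub_condExp_of_bounded E.filtration hadapted hbound,
    ae_all_iff.2 fun k => E.condExp_indicator_step (n := k) ha] with ω hω hcond
  refine hω.congr fun n => ?_
  simp only [← hcond]
  rfl

lemma ae_tendsto_stepProb (hd : 3 ≤ d) (hp0 : 0 ≤ p) (hp1 : p < 1) {a : G} (ha : a ∈ E.S) :
    ∀ᵐ ω ∂P, Tendsto (fun n => E.stepProb a n ω) atTop (nhds (1 / d)) := by
  have hd' : (3 : ℝ) ≤ d := mod_cast hd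
  have hcontract : |(p * d - 1) / ((d : ℝ) - 1)| < 1 := by
    rw [abs_lt, lt_div_iff₀ (by linarith), div_lt_one (by linarith)]
    constructor <;> nlinarith
  filter_upwards [E.ae_tendsto_sum_indicator_step_sub_stepProb_div ha] with ω hω
  have hnoise := hω.abs.const_mul |(p * d - 1) / ((d : ℝ) - 1)|
  rw [abs_zero, mul_zero] at hnoise
  rw [tendsto_iff_norm_sub_tendsto_zero]
  exact tendsto_zero_of_le_add_mul_cesaro (abs_nonneg _) hcontract (fun n => norm_nonneg _) hnoise
    fun n => E.abs_stepProb_sub_inv_le (by lia) a n ω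

lemma drift_ae_eq (n : ℕ) : E.drift n =ᵐ[P] fun ω =>
    ∑ a ∈ E.S, cayleyGraph.radialIncrement E.S a (E.pos n ω) * E.stepProb a n ω :=
  E.condExp_comp_step (c := fun a ω => cayleyGraph.radialIncrement E.S a (E.pos n ω))
    fun a _ _ _ h => by simp only [E.factorsThrough_pos h]

lemma ae_tendsto_sum_dist_sub_drift_div :
    ∀ᵐ ω ∂P, Tendsto (fun n : ℕ => (∑ k ∈ Finset.range n,
      ((E.dist (k + 1) ω : ℝ) - E.dist k ω - E.drift k ω)) / n) atTop (nhds 0) := by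
  refine strong_law_ae_sub_condExp_of_bounded (C := 1) E.filtration
    (fun k => stronglyMeasurable_of_factorsThrough_history fun ω ω' h => ?_)
    fun k => Eventually.of_forall fun ω => ?_
  · rw [dist, dist, dist, dist, E.factorsThrough_pos h,
      E.factorsThrough_history_of_le k.le_succ E.factorsThrough_pos h]
  · rw [dist_succ_sub_dist]
    exact cayleyGraph.abs_radialIncrement_le_one E.one_not_mem (E.mem_S _ k.succ_pos ω) _

lemma ae_tendsto_drift_sub (hd : 3 ≤ d) (hp0 : 0 ≤ p) (hp1 : p < 1) :
    ∀ᵐ ω ∂P, Tendsto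
      (fun k => E.drift k ω - if 0 < (E.dist k ω : ℝ) then ((d : ℝ) - 2) / d else 1) atTop
      (nhds 0) := by
  filter_upwards [ae_all_iff.2 E.drift_ae_eq,
    (eventually_all_finset E.S).2 fun a => E.ae_tendsto_stepProb hd hp0 hp1 (a := a)]
    with ω hdrift hprob
  have hterm : ∀ a ∈ E.S, Tendsto (fun k => cayleyGraph.radialIncrement E.S a (E.pos k ω)
      * (E.stepProb a k ω - 1 / d)) atTop (nhds 0) := fun a ha =>
    bdd_le_mul_tendsto_zero' 1
      (Eventually.of_forall fun k => cayleyGraph.abs_radialIncrement_le_one E.one_not_mem ha _)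
      (tendsto_sub_nhds_zero_iff.2 (hprob a ha))
  have hsum := tendsto_finsetSum E.S hterm
  rw [Finset.sum_const_zero] at hsum
  refine hsum.congr fun k => ?_
  rw [hdrift k, ← E.sum_radialIncrement_pos_div (by lia), Finset.sum_mul,
    ← Finset.sum_sub_distrib]
  simp only [mul_sub]

end ERW

/-- the ERW with memory parameter `p ∈ [0,1)` on a Cayley graph that is
the `d`-regular tree (`d ≥ 3`) satisfies `Δ n / n → (d - 2)/d` almost surely. -/
theorem erw_escape_rate
    {G : Type*} [Group G] [DecidableEq G] {Ω : Type*} [MeasurableSpace Ω]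
    {P : Measure Ω} [IsProbabilityMeasure P]
    (d : ℕ) (hd : 3 ≤ d) (p : ℝ) (hp0 : 0 ≤ p) (hp1 : p < 1)
    (E : ERW G d p Ω P) :
    ∀ᵐ ω ∂P, Tendsto (fun n : ℕ => (E.dist n ω : ℝ) / n) atTop
      (nhds (((d : ℝ) - 2) / d)) := by
  have hd' : (3 : ℝ) ≤ d := mod_cast hd
  have hspeed_pos : 0 < ((d : ℝ) - 2) / d := div_pos (by linarith) (by linarith)
  have hspeed_le : ((d : ℝ) - 2) / d ≤ 1 := (div_le_one (by linarith)).2 (by linarith)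
  filter_upwards [E.ae_tendsto_sum_dist_sub_drift_div, E.ae_tendsto_drift_sub hd hp0 hp1]
    with ω hnoise hdrift
  exact tendsto_div_of_tendsto_drift hspeed_pos hspeed_le hnoise hdrift

end
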